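/- Suppose (P) has a KKT point (Assumption 1). Let {μ_k}_{k≥1} ⊂ (0, ∞) be nondecreasing with μ_k → ∞, and let {ξ_k}_{k≥1} ⊂ [0, ∞) satisfy Σ_{k=1}^∞ √(2 ξ_k μ_k) < ∞. Let {x_k}_{k≥1} ⊆ χ, y₁ = 0, y_{k+1} = μ_k·( Π_K(Ax_k − b − y_k/μ_k) − (Ax_k − b − y_k/μ_k) ), and suppose L_{μ_k}(x_k, y_k) ≤ g_{μ_k}(y_k) + ξ_k for all k ≥ 1. Then the sequence {y_k} converges to a limit ȳ, and ȳ is a KKT point of (P): ȳ ∈ K* and g₀(ȳ) = p*. -/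

import Mathlib

open RealInnerProductSpace Metric

/-- The dual cone `K* = {y : ⟪y, s⟫ ≥ 0 for all s ∈ K}`. -/
def dualCone {m : ℕ} (K : Set (EuclideanSpace ℝ (Fin m))) :
    Set (EuclideanSpace ℝ (Fin m)) :=
  {y | ∀ s ∈ K, 0 ≤ ⟪y, s⟫}

/-- The penalty Lagrangian
`L_μ(x, y) = p(x) + (μ/2)·d_K(Ax - b - y/μ)² - ‖y‖²/(2μ)`. -/
noncomputable def Lpen {n m : ℕ}
    (A : EuclideanSpace ℝ (Fin n) →L[ℝ] EuclideanSpace ℝ (Fin m))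
    (b : EuclideanSpace ℝ (Fin m)) (K : Set (EuclideanSpace ℝ (Fin m)))
    (p : EuclideanSpace ℝ (Fin n) → ℝ) (μ : ℝ)
    (x : EuclideanSpace ℝ (Fin n)) (y : EuclideanSpace ℝ (Fin m)) : ℝ :=
  p x + μ / 2 * (infDist (A x - b - μ⁻¹ • y) K) ^ 2 - ‖y‖ ^ 2 / (2 * μ)

/-- `g_μ(y) = inf_{x ∈ χ} L_μ(x, y)`. -/
noncomputable def gmu {n m : ℕ}
    (A : EuclideanSpace ℝ (Fin n) →L[ℝ] EuclideanSpace ℝ (Fin m))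
    (b : EuclideanSpace ℝ (Fin m)) (K : Set (EuclideanSpace ℝ (Fin m)))
    (χ : Set (EuclideanSpace ℝ (Fin n)))
    (p : EuclideanSpace ℝ (Fin n) → ℝ) (μ : ℝ) (y : EuclideanSpace ℝ (Fin m)) : ℝ :=
  sInf ((fun x => Lpen A b K p μ x y) '' χ)

/-- The Lagrangian dual function `g₀(z) = inf_{x ∈ χ} { p(x) - ⟪z, Ax - b⟫ }`. -/
noncomputable def gzero {n m : ℕ}
    (A : EuclideanSpace ℝ (Fin n) →L[ℝ] EuclideanSpace ℝ (Fin m))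
    (b : EuclideanSpace ℝ (Fin m)) (χ : Set (EuclideanSpace ℝ (Fin n)))
    (p : EuclideanSpace ℝ (Fin n) → ℝ) (z : EuclideanSpace ℝ (Fin m)) : ℝ :=
  sInf ((fun x => p x - ⟪z, A x - b⟫) '' χ)

/-- The optimal value `p* = inf { p(x) : x ∈ χ, Ax - b ∈ K }` of the conic program (P). -/
noncomputable def pstar {n m : ℕ}
    (A : EuclideanSpace ℝ (Fin n) →L[ℝ] EuclideanSpace ℝ (Fin m))
    (b : EuclideanSpace ℝ (Fin m)) (K : Set (EuclideanSpace ℝ (Fin m)))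
    (χ : Set (EuclideanSpace ℝ (Fin n)))
    (p : EuclideanSpace ℝ (Fin n) → ℝ) : ℝ :=
  sInf (p '' {x ∈ χ | A x - b ∈ K})

/-!
The multiplier update is an inexact proximal point step for the dual problem of maximising `g₀`
over `K*`. Expanding squares shows that, for every `z` and with `y⁺` the update computed from `x`
and `q = Π_K(Ax - b - y/μ)`,
`L_μ(x, y) = p(x) - ⟪z, Ax - b⟫ - ‖z - y‖²/(2μ) + ‖z - y⁺‖²/(2μ) + ⟪z, q⟫`.
If `w` minimises `L_μ(·, y)` exactly, its update `z` is the proximal point of `y`, and if `x` is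
`ξ`-optimal the same identity gives `‖z - y⁺‖² ≤ 2ξμ`. Proximal points do not increase the distance
to a maximiser, and the errors are summable, so the distance to every maximiser converges; as
`μ_k → ∞` the dual values tend to the optimum, so every cluster point is a maximiser and hence the
whole sequence converges. By weak duality the maximisers are exactly the KKT points.
-/

section QuasiFejer

open Filter Topology

theorem exists_tendsto_of_le_add_summable {a ε : ℕ → ℝ} (hε : Summable ε)
    (hbdd : BddBelow (Set.range a)) (hstep : ∀ k, a (k + 1) ≤ a k + ε k) :
    ∃ l, Tendsto a atTop (𝓝 l) := by
  have hpartial := hε.hasSum.tendsto_sum_nat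
  have hanti : Antitone fun k ↦ a k - ∑ i ∈ Finset.range k, ε i := by
    refine antitone_nat_of_succ_le fun k ↦ ?_
    rw [Finset.sum_range_succ]
    linarith [hstep k]
  have hbelow : BddBelow (Set.range fun k ↦ a k - ∑ i ∈ Finset.range k, ε i) := by
    obtain ⟨c, hc⟩ := hbdd
    obtain ⟨C, hC⟩ := hpartial.bddAbove_range
    refine ⟨c - C, ?_⟩
    rintro _ ⟨k, rfl⟩
    exact sub_le_sub (hc ⟨k, rfl⟩) (hC ⟨k, rfl⟩)
  refine ⟨_, ((tendsto_atTop_ciInf hanti hbelow).add hpartial).congr fun k ↦ ?_⟩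
  exact sub_add_cancel _ _

theorem exists_tendsto_dist_of_dist_le_add_summable {X : Type*} [PseudoMetricSpace X]
    {y : ℕ → X} {ε : ℕ → ℝ} (hε : Summable ε) {u : X}
    (hstep : ∀ k, dist (y (k + 1)) u ≤ dist (y k) u + ε k) :
    ∃ l, Tendsto (fun k ↦ dist (y k) u) atTop (𝓝 l) :=
  exists_tendsto_of_le_add_summable hε
    ⟨0, Set.forall_mem_range.2 fun _ ↦ dist_nonneg⟩ hstep

theorem exists_mem_tendsto_of_quasiFejer {X : Type*} [PseudoMetricSpace X] [ProperSpace X]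
    {y : ℕ → X} {ε : ℕ → ℝ} {S : Set X} (hε : Summable ε) (hS : S.Nonempty)
    (hstep : ∀ u ∈ S, ∀ k, dist (y (k + 1)) u ≤ dist (y k) u + ε k)
    (hcluster : ∀ a, ∀ φ : ℕ → ℕ, StrictMono φ → Tendsto (y ∘ φ) atTop (𝓝 a) → a ∈ S) :
    ∃ a ∈ S, Tendsto y atTop (𝓝 a) := by
  obtain ⟨u, hu⟩ := hS
  obtain ⟨_, hdist_u⟩ := exists_tendsto_dist_of_dist_le_add_summable hε (hstep u hu)
  obtain ⟨R, hR⟩ := hdist_u.bddAbove_range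
  obtain ⟨a, -, φ, hφ, hlim⟩ :=
    (isCompact_closedBall u R).tendsto_subseq fun k ↦ mem_closedBall.2 (hR ⟨k, rfl⟩)
  have haS : a ∈ S := hcluster a φ hφ hlim
  obtain ⟨l, hdist_a⟩ := exists_tendsto_dist_of_dist_le_add_summable hε (hstep a haS)
  have hl : l = 0 :=
    tendsto_nhds_unique (hdist_a.comp hφ.tendsto_atTop) (tendsto_iff_dist_tendsto_zero.1 hlim)
  exact ⟨a, haS, tendsto_iff_dist_tendsto_zero.2 (hl ▸ hdist_a)⟩

end QuasiFejer

section ProximalPoint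

open Filter Topology

variable {F : Type*} [NormedAddCommGroup F] [InnerProductSpace ℝ F] {g : F → ℝ} {D : Set F}

/-- `z` is a proximal point of `y` with step `μ` for the maximisation of `g` over `D`. For concave
`g`, convex `D` and `0 < μ` this is the first-order characterisation of `z` as the maximiser of
`g u - ‖u - y‖² / (2μ)` over `u ∈ D`. -/
def IsProxPoint (g : F → ℝ) (D : Set F) (μ : ℝ) (y z : F) : Prop :=
  z ∈ D ∧ ∀ u ∈ D, g u ≤ g z + ⟪z - y, u - z⟫ / μ

theorem IsProxPoint.dist_le_dist_of_isMaxOn {μ : ℝ} {y z u : F} (h : IsProxPoint g D μ y z)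
    (hμ : 0 < μ) (hu : u ∈ D) (hmax : IsMaxOn g D u) : dist z u ≤ dist y u := by
  have hinner : 0 ≤ ⟪z - y, u - z⟫ := by
    have hdiv : 0 ≤ ⟪z - y, u - z⟫ / μ := by linarith [h.2 u hu, isMaxOn_iff.1 hmax z h.1]
    simpa only [div_mul_cancel₀ _ hμ.ne'] using mul_nonneg hdiv hμ.le
  have hexpand : ‖y - u‖ ^ 2 = ‖z - y‖ ^ 2 + 2 * ⟪z - y, u - z⟫ + ‖z - u‖ ^ 2 := by
    rw [norm_sub_rev z u, ← norm_add_sq_real, add_comm, sub_add_sub_cancel, norm_sub_rev]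
  rw [dist_eq_norm, dist_eq_norm]
  refine (sq_le_sq₀ (norm_nonneg _) (norm_nonneg _)).1 ?_
  linarith [sq_nonneg ‖z - y‖]

theorem IsProxPoint.le_add_dist_sq_div {μ : ℝ} {y z u : F} (h : IsProxPoint g D μ y z)
    (hμ : 0 < μ) (hu : u ∈ D) : g u ≤ g z + dist y u ^ 2 / (4 * μ) := by
  have hinner : 4 * ⟪z - y, u - z⟫ ≤ ‖y - u‖ ^ 2 := by
    have hadd := norm_add_sq_real (z - y) (u - z)
    have hsub := norm_sub_sq_real (z - y) (u - z)
    rw [add_comm, sub_add_sub_cancel, norm_sub_rev] at hadd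
    linarith [sq_nonneg ‖z - y - (u - z)‖]
  calc g u ≤ g z + ⟪z - y, u - z⟫ / μ := h.2 u hu
    _ = g z + 4 * ⟪z - y, u - z⟫ / (4 * μ) := by rw [mul_div_mul_left _ _ four_ne_zero]
    _ ≤ g z + dist y u ^ 2 / (4 * μ) := by rw [dist_eq_norm]; gcongr

variable {μ ε : ℕ → ℝ} {y z : ℕ → F}

theorem tendsto_value_of_inexact_prox (hμpos : ∀ k, 0 < μ k) (hμtop : Tendsto μ atTop atTop)
    (hε : Summable ε) (hprox : ∀ k, IsProxPoint g D (μ k) (y k) (z k))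
    (herr : ∀ k, dist (y (k + 1)) (z k) ≤ ε k) {u : F} (hu : u ∈ D) (hmax : IsMaxOn g D u) :
    Tendsto (fun k ↦ g (z k)) atTop (𝓝 (g u)) := by
  have hstep (k : ℕ) : dist (y (k + 1)) u ≤ dist (y k) u + ε k := by
    linarith [dist_triangle (y (k + 1)) (z k) u, herr k,
      (hprox k).dist_le_dist_of_isMaxOn (hμpos k) hu hmax]
  obtain ⟨l, hl⟩ := exists_tendsto_dist_of_dist_le_add_summable hε hstep
  have hgap : Tendsto (fun k ↦ dist (y k) u ^ 2 / (4 * μ k)) atTop (𝓝 0) :=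
    (hl.pow 2).div_atTop (hμtop.const_mul_atTop four_pos)
  have hlower : Tendsto (fun k ↦ g u - dist (y k) u ^ 2 / (4 * μ k)) atTop (𝓝 (g u)) := by
    simpa only [sub_zero] using hgap.const_sub (g u)
  refine tendsto_of_tendsto_of_tendsto_of_le_of_le hlower tendsto_const_nhds (fun k ↦ ?_)
    fun k ↦ hmax (hprox k).1
  exact sub_le_iff_le_add.2 ((hprox k).le_add_dist_sq_div (hμpos k) hu)

theorem le_of_upperSemicontinuousOn_of_tendsto {ι X β : Type*} [TopologicalSpace X]
    [LinearOrder β] [DenselyOrdered β] [TopologicalSpace β] [ClosedIicTopology β] {f : X → β}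
    {s : Set X} (hf : UpperSemicontinuousOn f s) {l : Filter ι} [l.NeBot] {x : ι → X}
    (hx : ∀ i, x i ∈ s) {a : X} (ha : a ∈ s) (hlim : Tendsto x l (𝓝 a)) {c : β}
    (hval : Tendsto (fun i ↦ f (x i)) l (𝓝 c)) : c ≤ f a := by
  refine le_of_forall_gt_imp_ge_of_dense fun d hd ↦ le_of_tendsto hval ?_
  have hwithin : Tendsto x l (𝓝[s] a) :=
    tendsto_nhdsWithin_iff.2 ⟨hlim, Eventually.of_forall hx⟩
  exact (hwithin.eventually (hf a ha d hd)).mono fun _ h ↦ h.le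

theorem exists_tendsto_isMaxOn_of_inexact_prox [ProperSpace F] (hD : IsClosed D)
    (hg : UpperSemicontinuousOn g D) (hmax : ∃ u ∈ D, IsMaxOn g D u)
    (hμpos : ∀ k, 0 < μ k) (hμtop : Tendsto μ atTop atTop) (hε : Summable ε)
    (hprox : ∀ k, IsProxPoint g D (μ k) (y k) (z k))
    (herr : ∀ k, dist (y (k + 1)) (z k) ≤ ε k) :
    ∃ a ∈ D, IsMaxOn g D a ∧ Tendsto y atTop (𝓝 a) := by
  have hcluster (a : F) (φ : ℕ → ℕ) (hφ : StrictMono φ) (hlim : Tendsto (z ∘ φ) atTop (𝓝 a)) :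
      a ∈ D ∧ IsMaxOn g D a := by
    obtain ⟨u, hu, humax⟩ := hmax
    have haD : a ∈ D := hD.mem_of_tendsto hlim (Eventually.of_forall fun k ↦ (hprox (φ k)).1)
    have hval := (tendsto_value_of_inexact_prox hμpos hμtop hε hprox herr hu humax).comp
      hφ.tendsto_atTop
    have hua : g u ≤ g a :=
      le_of_upperSemicontinuousOn_of_tendsto hg (fun k ↦ (hprox (φ k)).1) haD hlim hval
    exact ⟨haD, fun v hv ↦ (humax hv).trans hua⟩
  have hstep (u : F) (hu : u ∈ D ∧ IsMaxOn g D u) (k : ℕ) :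
      dist (z (k + 1)) u ≤ dist (z k) u + ε k := by
    linarith [(hprox (k + 1)).dist_le_dist_of_isMaxOn (hμpos (k + 1)) hu.1 hu.2,
      dist_triangle (y (k + 1)) (z k) u, herr k]
  obtain ⟨a, ⟨haD, hamax⟩, hz⟩ := exists_mem_tendsto_of_quasiFejer hε hmax hstep hcluster
  have hyz : Tendsto (fun k ↦ dist (z k) (y (k + 1))) atTop (𝓝 0) :=
    squeeze_zero (fun _ ↦ dist_nonneg) (fun k ↦ dist_comm (z k) _ ▸ herr k)
      hε.tendsto_atTop_zero
  exact ⟨a, haD, hamax,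
    (tendsto_add_atTop_iff_nat 1).1 ((tendsto_iff_of_dist hyz).1 hz)⟩

end ProximalPoint

section NearestPoint

variable {F : Type*} [NormedAddCommGroup F] {K : Set F} {v q : F}

/-- `q` is a point of `K` nearest to `v`, that is, `q = Π_K(v)` when `K` is closed and convex. -/
def IsNearestPoint (K : Set F) (v q : F) : Prop :=
  q ∈ K ∧ ∀ s ∈ K, ‖v - q‖ ≤ ‖v - s‖

theorem IsNearestPoint.infDist_eq (h : IsNearestPoint K v q) : infDist v K = ‖v - q‖ := by
  refine le_antisymm (dist_eq_norm v q ▸ infDist_le_dist_of_mem h.1) ?_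
  exact (le_infDist ⟨q, h.1⟩).2 fun s hs ↦ dist_eq_norm v s ▸ h.2 s hs

variable [InnerProductSpace ℝ F]

theorem IsNearestPoint.inner_sub_sub_nonpos (h : IsNearestPoint K v q) (hK : Convex ℝ K)
    {s : F} (hs : s ∈ K) : ⟪v - q, s - q⟫ ≤ 0 := by
  have : Nonempty K := ⟨⟨q, h.1⟩⟩
  have hinf : ‖v - q‖ = ⨅ w : K, ‖v - w‖ :=
    le_antisymm (le_ciInf fun w ↦ h.2 w w.2)
      (ciInf_le (f := fun w : K ↦ ‖v - w‖)
        ⟨0, Set.forall_mem_range.2 fun _ ↦ norm_nonneg _⟩ ⟨q, h.1⟩)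
  exact (norm_eq_iInf_iff_real_inner_le_zero hK h.1).1 hinf s hs

theorem IsNearestPoint.inner_sub_self_eq_zero (h : IsNearestPoint K v q) (hK : Convex ℝ K)
    (hcone : ∀ c : ℝ, 0 ≤ c → ∀ s ∈ K, c • s ∈ K) : ⟪q - v, q⟫ = 0 := by
  have hzero := h.inner_sub_sub_nonpos hK (hcone 0 le_rfl q h.1)
  have htwo := h.inner_sub_sub_nonpos hK (hcone 2 zero_le_two q h.1)
  simp only [inner_sub_left, inner_sub_right, real_inner_smul_right] at hzero htwo ⊢
  linarith

theorem IsNearestPoint.inner_sub_nonneg (h : IsNearestPoint K v q) (hK : Convex ℝ K)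
    (hcone : ∀ c : ℝ, 0 ≤ c → ∀ s ∈ K, c • s ∈ K) {s : F} (hs : s ∈ K) : 0 ≤ ⟪q - v, s⟫ := by
  have hvar := h.inner_sub_sub_nonpos hK hs
  have horth := h.inner_sub_self_eq_zero hK hcone
  rw [← neg_sub q v, inner_neg_left, inner_sub_right] at hvar
  linarith

end NearestPoint

section FirstOrder

open Filter Topology

theorem nonneg_of_forall_mul_add_sq_mul_nonneg {a c : ℝ}
    (h : ∀ t ∈ Set.Ioc (0 : ℝ) 1, 0 ≤ t * a + t ^ 2 * c) : 0 ≤ a := by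
  have hlim : Tendsto (fun t : ℝ ↦ a + t * c) (𝓝[>] 0) (𝓝 a) := by
    have hcont : Continuous fun t : ℝ ↦ a + t * c := by fun_prop
    simpa using (hcont.tendsto 0).mono_left nhdsWithin_le_nhds
  refine ge_of_tendsto hlim ?_
  filter_upwards [Ioc_mem_nhdsGT zero_lt_one] with t ht
  refine nonneg_of_mul_nonneg_right ?_ ht.1
  linarith [h t ht]

variable {E F : Type*} [AddCommGroup E] [Module ℝ E] [NormedAddCommGroup F]
  [InnerProductSpace ℝ F]

theorem isMinOn_add_inner_of_isMinOn_add_norm_sq {χ : Set E} {p : E → ℝ} (hp : ConvexOn ℝ χ p)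
    (A : E →ₗ[ℝ] F) (c : F) (μ : ℝ) {w : E} (hw : w ∈ χ)
    (hmin : IsMinOn (fun x ↦ p x + μ / 2 * ‖A x - c‖ ^ 2) χ w) :
    IsMinOn (fun x ↦ p x + μ * ⟪A w - c, A x⟫) χ w := by
  refine isMinOn_iff.2 fun x hx ↦ ?_
  suffices 0 ≤ p x - p w + μ * ⟪A w - c, A x - A w⟫ by
    rw [inner_sub_right] at this
    linarith
  refine nonneg_of_forall_mul_add_sq_mul_nonneg (c := μ / 2 * ‖A x - A w‖ ^ 2) fun t ht ↦ ?_
  have hsegment := isMinOn_iff.1 hmin _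
    (hp.1 hw hx (sub_nonneg.2 ht.2) ht.1.le (sub_add_cancel 1 t))
  have hconvex := hp.2 hw hx (sub_nonneg.2 ht.2) ht.1.le (sub_add_cancel 1 t)
  have hA : A ((1 - t) • w + t • x) - c = (A w - c) + t • (A x - A w) := by
    simp only [map_add, map_smul]
    module
  rw [hA, norm_add_sq_real, real_inner_smul_right, norm_smul, mul_pow, Real.norm_eq_abs,
    sq_abs] at hsegment
  simp only [smul_eq_mul] at hconvex
  linarith

end FirstOrder

section Duality

theorem csInf_image_eq_of_isMinOn {α β : Type*} [ConditionallyCompleteLattice β] {f : α → β}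
    {s : Set α} {w : α} (hw : w ∈ s) (hmin : IsMinOn f s w) : sInf (f '' s) = f w :=
  IsLeast.csInf_eq ⟨Set.mem_image_of_mem f hw, Set.forall_mem_image.2 (isMinOn_iff.1 hmin)⟩

variable {n m : ℕ} {K : Set (EuclideanSpace ℝ (Fin m))}
  {A : EuclideanSpace ℝ (Fin n) →L[ℝ] EuclideanSpace ℝ (Fin m)}
  {b : EuclideanSpace ℝ (Fin m)} {χ : Set (EuclideanSpace ℝ (Fin n))}
  {p : EuclideanSpace ℝ (Fin n) → ℝ} {z : EuclideanSpace ℝ (Fin m)}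

/-- The ordinary Lagrangian `p(x) - ⟪z, Ax - b⟫` of (P), whose infimum over `χ` is `g₀(z)`. -/
noncomputable def lagrangian
    (A : EuclideanSpace ℝ (Fin n) →L[ℝ] EuclideanSpace ℝ (Fin m))
    (b : EuclideanSpace ℝ (Fin m)) (p : EuclideanSpace ℝ (Fin n) → ℝ)
    (x : EuclideanSpace ℝ (Fin n)) (z : EuclideanSpace ℝ (Fin m)) : ℝ :=
  p x - ⟪z, A x - b⟫

theorem isClosed_dualCone (K : Set (EuclideanSpace ℝ (Fin m))) : IsClosed (dualCone K) := by
  simp only [dualCone, Set.ofPred_forall]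
  exact isClosed_biInter fun s _ ↦ isClosed_le continuous_const (by fun_prop)

theorem bddBelow_lagrangian_image (hχ : IsCompact χ) (hp : ContinuousOn p χ) :
    BddBelow ((lagrangian A b p · z) '' χ) :=
  (hχ.image_of_continuousOn (by unfold lagrangian; fun_prop)).bddBelow

theorem gzero_le_lagrangian (hχ : IsCompact χ) (hp : ContinuousOn p χ)
    {x : EuclideanSpace ℝ (Fin n)} (hx : x ∈ χ) : gzero A b χ p z ≤ lagrangian A b p x z :=
  csInf_le (bddBelow_lagrangian_image hχ hp) ⟨x, hx, rfl⟩

theorem gzero_eq_lagrangian_of_isMinOn {w : EuclideanSpace ℝ (Fin n)} (hw : w ∈ χ)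
    (hmin : IsMinOn (lagrangian A b p · z) χ w) : gzero A b χ p z = lagrangian A b p w z :=
  csInf_image_eq_of_isMinOn hw hmin

theorem upperSemicontinuous_gzero (hχ : IsCompact χ) (hp : ContinuousOn p χ) :
    UpperSemicontinuous (gzero A b χ p) := by
  have hgzero : gzero A b χ p = fun z ↦ ⨅ x : χ, lagrangian A b p x z :=
    funext fun _ ↦ sInf_image'
  rw [hgzero]
  refine upperSemicontinuous_ciInf (fun z ↦ ?_) fun x ↦ ?_
  · simpa only [Set.image_eq_range] using bddBelow_lagrangian_image (z := z) hχ hp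
  · exact Continuous.upperSemicontinuous (by unfold lagrangian; fun_prop)

theorem gzero_le_pstar (hχ : IsCompact χ) (hp : ContinuousOn p χ)
    (hfeas : {x ∈ χ | A x - b ∈ K}.Nonempty) (hz : z ∈ dualCone K) :
    gzero A b χ p z ≤ pstar A b K χ p := by
  refine le_csInf (hfeas.image p) ?_
  rintro _ ⟨x, ⟨hxχ, hxK⟩, rfl⟩
  calc gzero A b χ p z ≤ p x - ⟪z, A x - b⟫ := gzero_le_lagrangian hχ hp hxχ
    _ ≤ p x := sub_le_self _ (hz _ hxK)

end Duality

section AugmentedLagrangian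

variable {n m : ℕ} {K : Set (EuclideanSpace ℝ (Fin m))}
  {A : EuclideanSpace ℝ (Fin n) →L[ℝ] EuclideanSpace ℝ (Fin m)}
  {b : EuclideanSpace ℝ (Fin m)} {χ : Set (EuclideanSpace ℝ (Fin n))}
  {p : EuclideanSpace ℝ (Fin n) → ℝ}
  {PK : EuclideanSpace ℝ (Fin m) → EuclideanSpace ℝ (Fin m)} {μ : ℝ}

/-- The multiplier update `μ (Π_K(v) - v)` with `v = Ax - b - y/μ`, where `PK` plays the role of
the projection `Π_K`. -/
noncomputable def multiplierUpdate
    (A : EuclideanSpace ℝ (Fin n) →L[ℝ] EuclideanSpace ℝ (Fin m))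
    (b : EuclideanSpace ℝ (Fin m))
    (PK : EuclideanSpace ℝ (Fin m) → EuclideanSpace ℝ (Fin m)) (μ : ℝ)
    (x : EuclideanSpace ℝ (Fin n)) (y : EuclideanSpace ℝ (Fin m)) :
    EuclideanSpace ℝ (Fin m) :=
  μ • (PK (A x - b - μ⁻¹ • y) - (A x - b - μ⁻¹ • y))

variable (A b p) in
theorem Lpen_eq_lagrangian (hPK : ∀ v, IsNearestPoint K v (PK v)) (hμ : μ ≠ 0)
    (x : EuclideanSpace ℝ (Fin n)) (y z : EuclideanSpace ℝ (Fin m)) :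
    Lpen A b K p μ x y = lagrangian A b p x z - ‖z - y‖ ^ 2 / (2 * μ)
      + ‖z - multiplierUpdate A b PK μ x y‖ ^ 2 / (2 * μ) + ⟪z, PK (A x - b - μ⁻¹ • y)⟫ := by
  unfold Lpen lagrangian multiplierUpdate
  rw [(hPK _).infDist_eq]
  obtain ⟨v, hv⟩ : ∃ v, v = A x - b - μ⁻¹ • y := ⟨_, rfl⟩
  rw [← hv, show A x - b = v + μ⁻¹ • y from eq_add_of_sub_eq hv.symm]
  rw [norm_sub_sq_real z y, norm_sub_sq_real z (μ • (PK v - v)), norm_smul,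
    norm_sub_rev v (PK v), mul_pow, Real.norm_eq_abs, sq_abs]
  simp only [inner_sub_right, inner_add_right, real_inner_smul_right]
  field_simp
  ring

variable (A b) in
theorem multiplierUpdate_mem_dualCone (hPK : ∀ v, IsNearestPoint K v (PK v)) (hK : Convex ℝ K)
    (hcone : ∀ c : ℝ, 0 ≤ c → ∀ s ∈ K, c • s ∈ K) (hμ : 0 ≤ μ)
    (x : EuclideanSpace ℝ (Fin n)) (y : EuclideanSpace ℝ (Fin m)) :
    multiplierUpdate A b PK μ x y ∈ dualCone K := fun s hs ↦ by
  rw [multiplierUpdate, real_inner_smul_left]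
  exact mul_nonneg hμ ((hPK _).inner_sub_nonneg hK hcone hs)

variable (A b p) in
theorem Lpen_eq_lagrangian_multiplierUpdate (hPK : ∀ v, IsNearestPoint K v (PK v))
    (hK : Convex ℝ K) (hcone : ∀ c : ℝ, 0 ≤ c → ∀ s ∈ K, c • s ∈ K) (hμ : μ ≠ 0)
    (x : EuclideanSpace ℝ (Fin n)) (y : EuclideanSpace ℝ (Fin m)) :
    Lpen A b K p μ x y = lagrangian A b p x (multiplierUpdate A b PK μ x y)
      - ‖multiplierUpdate A b PK μ x y - y‖ ^ 2 / (2 * μ) := by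
  have horth : ⟪multiplierUpdate A b PK μ x y, PK (A x - b - μ⁻¹ • y)⟫ = 0 := by
    rw [multiplierUpdate, real_inner_smul_left, (hPK _).inner_sub_self_eq_zero hK hcone, mul_zero]
  rw [Lpen_eq_lagrangian A b p hPK hμ x y (multiplierUpdate A b PK μ x y), horth]
  simp

variable (A b p) in
theorem lagrangian_add_le_Lpen (hPK : ∀ v, IsNearestPoint K v (PK v)) (hμ : μ ≠ 0)
    (x : EuclideanSpace ℝ (Fin n)) (y : EuclideanSpace ℝ (Fin m))
    {z : EuclideanSpace ℝ (Fin m)} (hz : z ∈ dualCone K) :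
    lagrangian A b p x z - ‖z - y‖ ^ 2 / (2 * μ)
      + ‖z - multiplierUpdate A b PK μ x y‖ ^ 2 / (2 * μ) ≤ Lpen A b K p μ x y := by
  linarith [Lpen_eq_lagrangian A b p hPK hμ x y z,
    hz _ (hPK (A x - b - μ⁻¹ • y)).1]

theorem exists_isMinOn_Lpen (hχ : IsCompact χ) (hχne : χ.Nonempty) (hp : ContinuousOn p χ)
    (y : EuclideanSpace ℝ (Fin m)) : ∃ w ∈ χ, IsMinOn (Lpen A b K p μ · y) χ w := by
  have hdist : Continuous fun x ↦ infDist (A x - b - μ⁻¹ • y) K :=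
    (continuous_infDist_pt K).comp (by fun_prop)
  exact hχ.exists_isMinOn hχne
    ((hp.add (continuousOn_const.mul (hdist.pow 2).continuousOn)).sub continuousOn_const)

theorem gmu_eq_Lpen_of_isMinOn {y : EuclideanSpace ℝ (Fin m)} {w : EuclideanSpace ℝ (Fin n)}
    (hw : w ∈ χ) (hmin : IsMinOn (Lpen A b K p μ · y) χ w) :
    gmu A b K χ p μ y = Lpen A b K p μ w y :=
  csInf_image_eq_of_isMinOn hw hmin

-- Fixing the projection at its value for `w` majorises `L_μ(·, y)` by a function that agrees
-- with it at `w`, so `w` also minimises this majorant, whose penalty term is quadratic.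
theorem isMinOn_lagrangian_multiplierUpdate (hPK : ∀ v, IsNearestPoint K v (PK v)) (hμ : 0 < μ)
    (hp : ConvexOn ℝ χ p) {y : EuclideanSpace ℝ (Fin m)} {w : EuclideanSpace ℝ (Fin n)}
    (hw : w ∈ χ) (hmin : IsMinOn (Lpen A b K p μ · y) χ w) :
    IsMinOn (lagrangian A b p · (multiplierUpdate A b PK μ w y)) χ w := by
  set q := PK (A w - b - μ⁻¹ • y) with hq
  have hmajorant : IsMinOn (fun x ↦ p x + μ / 2 * ‖A x - (b + μ⁻¹ • y + q)‖ ^ 2) χ w := by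
    refine isMinOn_iff.2 fun x hx ↦ ?_
    have hle := isMinOn_iff.1 hmin x hx
    have hdist : infDist (A x - b - μ⁻¹ • y) K ^ 2 ≤ ‖A x - b - μ⁻¹ • y - q‖ ^ 2 :=
      pow_le_pow_left₀ infDist_nonneg (dist_eq_norm _ q ▸ infDist_le_dist_of_mem (hPK _).1) 2
    have hscaled := mul_le_mul_of_nonneg_left hdist (half_pos hμ).le
    simp only [Lpen, (hPK (A w - b - μ⁻¹ • y)).infDist_eq, ← hq] at hle
    simp only [← sub_sub]
    linarith
  have hlinear := isMinOn_add_inner_of_isMinOn_add_norm_sq hp A.toLinearMap _ μ hw hmajorant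
  refine isMinOn_iff.2 fun x hx ↦ ?_
  have hle := isMinOn_iff.1 hlinear x hx
  have hupdate : multiplierUpdate A b PK μ w y = -(μ • (A w - (b + μ⁻¹ • y + q))) := by
    rw [multiplierUpdate, ← hq]
    module
  simp only [lagrangian, hupdate, inner_neg_left, real_inner_smul_left, inner_sub_right _ _ b]
  simp only [ContinuousLinearMap.coe_coe] at hle
  linarith

theorem isProxPoint_multiplierUpdate (hPK : ∀ v, IsNearestPoint K v (PK v)) (hK : Convex ℝ K)
    (hcone : ∀ c : ℝ, 0 ≤ c → ∀ s ∈ K, c • s ∈ K) (hμ : 0 < μ) (hχ : IsCompact χ)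
    (hp : ConvexOn ℝ χ p) (hpc : ContinuousOn p χ) {y : EuclideanSpace ℝ (Fin m)}
    {w : EuclideanSpace ℝ (Fin n)} (hw : w ∈ χ) (hmin : IsMinOn (Lpen A b K p μ · y) χ w) :
    IsProxPoint (gzero A b χ p) (dualCone K) μ y (multiplierUpdate A b PK μ w y) := by
  refine ⟨multiplierUpdate_mem_dualCone A b hPK hK hcone hμ.le w y, fun u hu ↦ ?_⟩
  rw [gzero_eq_lagrangian_of_isMinOn hw (isMinOn_lagrangian_multiplierUpdate hPK hμ hp hw hmin)]
  have hself := Lpen_eq_lagrangian_multiplierUpdate A b p hPK hK hcone hμ.ne' w y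
  have hu_le := lagrangian_add_le_Lpen A b p hPK hμ.ne' w y hu
  set z := multiplierUpdate A b PK μ w y
  have hexpand : ⟪z - y, u - z⟫ / μ
      = ‖u - y‖ ^ 2 / (2 * μ) - ‖z - y‖ ^ 2 / (2 * μ) - ‖u - z‖ ^ 2 / (2 * μ) := by
    rw [← sub_add_sub_cancel' z y u, norm_add_sq_real]
    field_simp
    ring
  linarith [gzero_le_lagrangian (A := A) (b := b) (z := u) hχ hpc hw]

theorem dist_multiplierUpdate_le (hPK : ∀ v, IsNearestPoint K v (PK v)) (hK : Convex ℝ K)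
    (hcone : ∀ c : ℝ, 0 ≤ c → ∀ s ∈ K, c • s ∈ K) (hμ : 0 < μ) (hp : ConvexOn ℝ χ p)
    {y : EuclideanSpace ℝ (Fin m)} {w x : EuclideanSpace ℝ (Fin n)} (hw : w ∈ χ)
    (hmin : IsMinOn (Lpen A b K p μ · y) χ w) (hx : x ∈ χ) {ξ : ℝ}
    (hξ : Lpen A b K p μ x y ≤ Lpen A b K p μ w y + ξ) :
    dist (multiplierUpdate A b PK μ x y) (multiplierUpdate A b PK μ w y)
      ≤ Real.sqrt (2 * ξ * μ) := by
  have hself := Lpen_eq_lagrangian_multiplierUpdate A b p hPK hK hcone hμ.ne' w y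
  have hx_le := lagrangian_add_le_Lpen A b p hPK hμ.ne' x y
    (multiplierUpdate_mem_dualCone A b hPK hK hcone hμ.le w y)
  have hwx := isMinOn_iff.1 (isMinOn_lagrangian_multiplierUpdate hPK hμ hp hw hmin) x hx
  have hsq : ‖multiplierUpdate A b PK μ w y - multiplierUpdate A b PK μ x y‖ ^ 2 / (2 * μ) ≤ ξ := by
    linarith
  rw [div_le_iff₀ (by positivity)] at hsq
  rw [dist_comm, dist_eq_norm]
  exact Real.le_sqrt_of_sq_le (by linarith)

theorem exists_isProxPoint_dist_multiplierUpdate_le (hPK : ∀ v, IsNearestPoint K v (PK v))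
    (hK : Convex ℝ K) (hcone : ∀ c : ℝ, 0 ≤ c → ∀ s ∈ K, c • s ∈ K) (hμ : 0 < μ)
    (hχ : IsCompact χ) (hp : ConvexOn ℝ χ p) (hpc : ContinuousOn p χ)
    {y : EuclideanSpace ℝ (Fin m)} {x : EuclideanSpace ℝ (Fin n)} (hx : x ∈ χ) {ξ : ℝ}
    (hξ : Lpen A b K p μ x y ≤ gmu A b K χ p μ y + ξ) :
    ∃ z, IsProxPoint (gzero A b χ p) (dualCone K) μ y z ∧
      dist (multiplierUpdate A b PK μ x y) z ≤ Real.sqrt (2 * ξ * μ) := by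
  obtain ⟨w, hw, hmin⟩ := exists_isMinOn_Lpen (A := A) (b := b) (K := K) (μ := μ) hχ ⟨x, hx⟩ hpc y
  rw [gmu_eq_Lpen_of_isMinOn hw hmin] at hξ
  exact ⟨multiplierUpdate A b PK μ w y,
    isProxPoint_multiplierUpdate hPK hK hcone hμ hχ hp hpc hw hmin,
    dist_multiplierUpdate_le hPK hK hcone hμ hp hw hmin hx hξ⟩

end AugmentedLagrangian

theorem stmt_19_general {n m : ℕ} {K : Set (EuclideanSpace ℝ (Fin m))} (hK : Convex ℝ K)
    (hcone : ∀ c : ℝ, 0 ≤ c → ∀ s ∈ K, c • s ∈ K)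
    {A : EuclideanSpace ℝ (Fin n) →L[ℝ] EuclideanSpace ℝ (Fin m)}
    {b : EuclideanSpace ℝ (Fin m)} {χ : Set (EuclideanSpace ℝ (Fin n))} (hχ : IsCompact χ)
    {p : EuclideanSpace ℝ (Fin n) → ℝ} (hp : ConvexOn ℝ χ p) (hpc : ContinuousOn p χ)
    (hfeas : {x ∈ χ | A x - b ∈ K}.Nonempty)
    (hKKT : ∃ u ∈ dualCone K, gzero A b χ p u = pstar A b K χ p)
    {PK : EuclideanSpace ℝ (Fin m) → EuclideanSpace ℝ (Fin m)}
    (hPK : ∀ v, IsNearestPoint K v (PK v))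
    {μ : ℕ → ℝ} (hμpos : ∀ k, 0 < μ k) (hμtop : Filter.Tendsto μ Filter.atTop Filter.atTop)
    {ξ : ℕ → ℝ} (hsum : Summable fun k ↦ Real.sqrt (2 * ξ k * μ k))
    {x : ℕ → EuclideanSpace ℝ (Fin n)} (hx : ∀ k, x k ∈ χ)
    {y : ℕ → EuclideanSpace ℝ (Fin m)}
    (hy : ∀ k, y (k + 1) = multiplierUpdate A b PK (μ k) (x k) (y k))
    (hL : ∀ k, Lpen A b K p (μ k) (x k) (y k) ≤ gmu A b K χ p (μ k) (y k) + ξ k) :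
    ∃ ybar, Filter.Tendsto y Filter.atTop (nhds ybar) ∧
      ybar ∈ dualCone K ∧ gzero A b χ p ybar = pstar A b K χ p := by
  obtain ⟨u, hu, hustar⟩ := hKKT
  have humax : IsMaxOn (gzero A b χ p) (dualCone K) u := isMaxOn_iff.2 fun z hz ↦
    hustar ▸ gzero_le_pstar hχ hpc hfeas hz
  choose z hprox herr using fun k ↦ exists_isProxPoint_dist_multiplierUpdate_le
    hPK hK hcone (hμpos k) hχ hp hpc (hx k) (hL k)
  obtain ⟨ybar, hmem, hmax, hlim⟩ := exists_tendsto_isMaxOn_of_inexact_prox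
    (isClosed_dualCone K) ((upperSemicontinuous_gzero hχ hpc).upperSemicontinuousOn _)
    ⟨u, hu, humax⟩ hμpos hμtop hsum hprox fun k ↦ hy k ▸ herr k
  exact ⟨ybar, hlim, hmem,
    (gzero_le_pstar hχ hpc hfeas hmem).antisymm (hustar ▸ isMaxOn_iff.1 hmax u hu)⟩

/-- convergence of the dual ALCC iterates. If (P) has a KKT point,
`{μ_k}` is nondecreasing with `μ_k → ∞`, `Σ_{k≥1} √(2 ξ_k μ_k) < ∞`,
`L_{μ_k}(x_k, y_k) ≤ g_{μ_k}(y_k) + ξ_k` and the duals are updated by `y₁ = 0`,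
`y_{k+1} = μ_k (Π_K(Ax_k - b - y_k/μ_k) - (Ax_k - b - y_k/μ_k))`, then `{y_k}`
converges to some `ȳ` which is a KKT point of (P): `ȳ ∈ K*` and `g₀(ȳ) = p*`. -/
theorem stmt_19 {n m : ℕ} (K : Set (EuclideanSpace ℝ (Fin m)))
    (hKne : K.Nonempty) (hKcl : IsClosed K) (hKcv : Convex ℝ K)
    (hKcone : ∀ (c : ℝ), 0 ≤ c → ∀ x ∈ K, c • x ∈ K)
    (A : EuclideanSpace ℝ (Fin n) →L[ℝ] EuclideanSpace ℝ (Fin m))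
    (b : EuclideanSpace ℝ (Fin m))
    (χ : Set (EuclideanSpace ℝ (Fin n)))
    (hχne : χ.Nonempty) (hχcp : IsCompact χ) (hχcv : Convex ℝ χ)
    (p : EuclideanSpace ℝ (Fin n) → ℝ) (hp : ConvexOn ℝ Set.univ p)
    (hfeas : {x ∈ χ | A x - b ∈ K}.Nonempty)
    (hKKT : ∃ ystar ∈ dualCone K, gzero A b χ p ystar = pstar A b K χ p)
    -- `PK` is the Euclidean projection onto `K`
    (PK : EuclideanSpace ℝ (Fin m) → EuclideanSpace ℝ (Fin m))
    (hPKmem : ∀ v, PK v ∈ K)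
    (hPK : ∀ v, ∀ s ∈ K, ‖v - PK v‖ ≤ ‖v - s‖)
    (μ : ℕ → ℝ) (hμpos : ∀ k, 1 ≤ k → 0 < μ k)
    (hμmono : ∀ k, 1 ≤ k → μ k ≤ μ (k + 1))
    (hμtop : Filter.Tendsto μ Filter.atTop Filter.atTop)
    (ξ : ℕ → ℝ) (hξ : ∀ k, 1 ≤ k → 0 ≤ ξ k)
    (hsum : Summable (fun k : ℕ => Real.sqrt (2 * ξ (k + 1) * μ (k + 1))))
    (x : ℕ → EuclideanSpace ℝ (Fin n)) (hx : ∀ k, 1 ≤ k → x k ∈ χ)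
    (y : ℕ → EuclideanSpace ℝ (Fin m)) (hy1 : y 1 = 0)
    (hyrec : ∀ k, 1 ≤ k → y (k + 1)
      = μ k • (PK (A (x k) - b - (μ k)⁻¹ • y k) - (A (x k) - b - (μ k)⁻¹ • y k)))
    (hL : ∀ k, 1 ≤ k →
      Lpen A b K p (μ k) (x k) (y k) ≤ gmu A b K χ p (μ k) (y k) + ξ k) :
    ∃ ybar : EuclideanSpace ℝ (Fin m),
      Filter.Tendsto y Filter.atTop (nhds ybar) ∧
      ybar ∈ dualCone K ∧ gzero A b χ p ybar = pstar A b K χ p := by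
  have hpc : ContinuousOn p χ := (hp.continuousOn isOpen_univ).mono χ.subset_univ
  obtain ⟨ybar, hlim, hybar⟩ := stmt_19_general hKcv hKcone hχcp (hp.subset χ.subset_univ hχcv)
    hpc hfeas hKKT (fun v ↦ ⟨hPKmem v, hPK v⟩) (fun k ↦ hμpos (k + 1) k.succ_pos)
    (hμtop.comp (Filter.tendsto_add_atTop_nat 1)) hsum (fun k ↦ hx (k + 1) k.succ_pos)
    (fun k ↦ hyrec (k + 1) k.succ_pos) (fun k ↦ hL (k + 1) k.succ_pos)
  exact ⟨ybar, (Filter.tendsto_add_atTop_iff_nat 1).1 hlim, hybar⟩
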